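/- arXiv:2304.06913 — 4 statements merged into one kernel-verified Lean document; each statement's English description precedes it below -/
import Mathlib

section
/- Let Ω ⊂ ℝ^d be compact, T > 0, and let σ : ℝ → ℝ be any bounded, Borel-measurable sigmoidal function. If μ is a finite signed (regular Borel) measure on Ω × [0,T] such that ∫_{Ω × [0,T]} σ(⟨k^x, x⟩ + b^x) σ(k^t t + b^t) dμ(x,t) = 0 for all k^x ∈ ℝ^d and all k^t, b^x, b^t ∈ ℝ, then μ = 0. In particular, every continuous sigmoidal function is discriminatory in this separated (product) sense. -/
open Filter MeasureTheory

/-!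
As `r → ∞`, `σ (r² z + r)` tends to the indicator of `0 ≤ z`: the gain `r²` dominates the bias `r`,
except at `z = 0`, where the bias alone sends the argument to `+∞`. By dominated convergence the
product integrals therefore determine, for each pair of functionals `L`, `M`, the mass that the
image of the measure under `(x, t) ↦ (L x, M t)` gives to every closed quadrant, hence that image
measure. As every functional on `E × F` factors through such a map, the images determine the
characteristic function.
-/

open Set Topology

/-- A sigmoidal function: limit `1` at `+∞` and `0` at `-∞`. Boundedness and measurability are not
part of the notion. -/
structure IsSigmoidal (σ : ℝ → ℝ) : Prop where
  tendsto_atTop : Tendsto σ atTop (𝓝 1)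
  tendsto_atBot : Tendsto σ atBot (𝓝 0)

namespace IsSigmoidal

variable {σ : ℝ → ℝ}

theorem tendsto_sq_mul_add_indicator_Ici (hσ : IsSigmoidal σ) (z : ℝ) :
    Tendsto (fun r : ℝ => σ (r ^ 2 * z + r)) atTop (𝓝 ((Ici 0).indicator 1 z)) := by
  rcases le_or_gt 0 z with hz | hz
  · rw [indicator_of_mem (mem_Ici.2 hz)]
    have harg : Tendsto (fun r : ℝ => r ^ 2 * z + r) atTop atTop :=
      tendsto_atTop_mono (fun r => le_add_of_nonneg_left (by positivity)) tendsto_id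
    exact hσ.tendsto_atTop.comp harg
  · rw [indicator_of_notMem (notMem_Ici.2 hz)]
    have hfactor : Tendsto (fun r : ℝ => r * (r * z + 1)) atTop atBot :=
      tendsto_id.atTop_mul_atBot₀
        (tendsto_atBot_add_const_right _ _ (tendsto_id.atTop_mul_const_of_neg hz))
    have harg : Tendsto (fun r : ℝ => r ^ 2 * z + r) atTop atBot :=
      hfactor.congr fun r => by ring
    exact hσ.tendsto_atBot.comp harg

theorem tendsto_integral_mul {α : Type*} {_ : MeasurableSpace α} {μ : Measure α}
    [IsFiniteMeasure μ] (hσ : IsSigmoidal σ) (hσm : Measurable σ) (hσb : ∃ C, ∀ z, |σ z| ≤ C)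
    {f g : α → ℝ} (hf : Measurable f) (hg : Measurable g) :
    Tendsto (fun r : ℝ => ∫ p, σ (r ^ 2 * f p + r) * σ (r ^ 2 * g p + r) ∂μ) atTop
      (𝓝 (μ.real (f ⁻¹' Ici 0 ∩ g ⁻¹' Ici 0))) := by
  obtain ⟨C, hC⟩ := hσb
  rw [← integral_indicator_one ((hf measurableSet_Ici).inter (hg measurableSet_Ici))]
  refine tendsto_integral_filter_of_dominated_convergence (fun _ => C * C)
    (.of_forall fun r => Measurable.aestronglyMeasurable (by fun_prop))
    (.of_forall fun r => .of_forall fun p => ?_) (integrable_const _) (.of_forall fun p => ?_)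
  · rw [Real.norm_eq_abs, abs_mul]
    exact mul_le_mul (hC _) (hC _) (abs_nonneg _) ((abs_nonneg _).trans (hC 0))
  · rw [inter_indicator_one]
    exact (hσ.tendsto_sq_mul_add_indicator_Ici (f p)).mul
      (hσ.tendsto_sq_mul_add_indicator_Ici (g p))

end IsSigmoidal

section Ici

variable {α β γ : Type*} {_ : MeasurableSpace γ}
  [TopologicalSpace α] [LinearOrder α] [OrderTopology α] [SecondCountableTopology α]
  [MeasurableSpace α] [BorelSpace α]
  [TopologicalSpace β] [LinearOrder β] [OrderTopology β] [SecondCountableTopology β]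
  [MeasurableSpace β] [BorelSpace β]

theorem measure_preimage_inter_eq_of_Ici {μ ν : Measure γ} [IsFiniteMeasure μ] {f : γ → α}
    (hf : Measurable f) {t : Set γ} (h : ∀ a, μ (f ⁻¹' Ici a ∩ t) = ν (f ⁻¹' Ici a ∩ t))
    {s : Set α} (hs : MeasurableSet s) : μ (f ⁻¹' s ∩ t) = ν (f ⁻¹' s ∩ t) := by
  have map_restrict_apply (ρ : Measure γ) {u : Set α} (hu : MeasurableSet u) :
      (ρ.restrict t).map f u = ρ (f ⁻¹' u ∩ t) := by
    rw [Measure.map_apply hf hu, Measure.restrict_apply (hf hu)]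
  have hmap : (μ.restrict t).map f = (ν.restrict t).map f :=
    Measure.ext_of_Ici _ _ fun a => by
      simpa only [map_restrict_apply _ measurableSet_Ici] using h a
  rw [← map_restrict_apply μ hs, hmap, map_restrict_apply ν hs]

theorem measure_ext_of_Ici_prod_Ici {μ ν : Measure (α × β)} [IsFiniteMeasure μ]
    (h : ∀ a b, μ (Ici a ×ˢ Ici b) = ν (Ici a ×ˢ Ici b)) : μ = ν := by
  have hIci {s : Set α} (hs : MeasurableSet s) (b : β) : μ (s ×ˢ Ici b) = ν (s ×ˢ Ici b) :=
    measure_preimage_inter_eq_of_Ici measurable_fst (fun a => h a b) hs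
  refine Measure.ext_prod fun {s t} hs ht => ?_
  rw [Set.prod_eq, inter_comm]
  refine measure_preimage_inter_eq_of_Ici measurable_snd (fun b => ?_) ht
  rw [inter_comm]
  exact hIci hs b

end Ici

theorem IsSigmoidal.measure_ext_of_integral_mul {σ : ℝ → ℝ} (hσ : IsSigmoidal σ)
    (hσm : Measurable σ) (hσb : ∃ C, ∀ z, |σ z| ≤ C)
    {μ ν : Measure (ℝ × ℝ)} [IsFiniteMeasure μ] [IsFiniteMeasure ν]
    (h : ∀ k l b c, ∫ p, σ (k * p.1 + b) * σ (l * p.2 + c) ∂μ =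
      ∫ p, σ (k * p.1 + b) * σ (l * p.2 + c) ∂ν) :
    μ = ν := by
  refine measure_ext_of_Ici_prod_Ici fun a b => ?_
  have hquadrant : (Ici a ×ˢ Ici b : Set (ℝ × ℝ)) =
      (fun p => p.1 - a) ⁻¹' Ici 0 ∩ (fun p => p.2 - b) ⁻¹' Ici 0 := by
    ext p
    simp [Prod.le_def]
  have hfst : Measurable fun p : ℝ × ℝ => p.1 - a := by fun_prop
  have hsnd : Measurable fun p : ℝ × ℝ => p.2 - b := by fun_prop
  have hμ := hσ.tendsto_integral_mul (μ := μ) hσm hσb hfst hsnd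
  have hν := hσ.tendsto_integral_mul (μ := ν) hσm hσb hfst hsnd
  have haffine (r x c : ℝ) : r ^ 2 * (x - c) + r = r ^ 2 * x + (r - r ^ 2 * c) := by ring
  simp only [haffine, h] at hμ hν
  rw [hquadrant, ← measureReal_eq_measureReal_iff]
  exact tendsto_nhds_unique hμ hν

section Dual

variable {E F : Type*}
  [NormedAddCommGroup E] [NormedSpace ℝ E] [CompleteSpace E] [SecondCountableTopology E]
  [MeasurableSpace E] [BorelSpace E]
  [NormedAddCommGroup F] [NormedSpace ℝ F] [CompleteSpace F] [SecondCountableTopology F]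
  [MeasurableSpace F] [BorelSpace F]

-- A form of the Cramér–Wold theorem adapted to products.
theorem measure_ext_of_map_prodMap_strongDual {μ ν : Measure (E × F)} [IsFiniteMeasure μ]
    [IsFiniteMeasure ν]
    (h : ∀ (L : StrongDual ℝ E) (M : StrongDual ℝ F), μ.map (L.prodMap M) = ν.map (L.prodMap M)) :
    μ = ν := by
  refine Measure.ext_of_charFunDual (funext fun Λ => ?_)
  let L : StrongDual ℝ E := Λ.comp (.inl ℝ E F)
  let M : StrongDual ℝ F := Λ.comp (.inr ℝ E F)
  have hΛ : Λ = (ContinuousLinearMap.fst ℝ ℝ ℝ + .snd ℝ ℝ ℝ).comp (L.prodMap M) :=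
    ContinuousLinearMap.ext fun v => (Λ.comp_inl_add_comp_inr v).symm
  rw [hΛ, ← charFunDual_map, ← charFunDual_map, h]

theorem sigmoidal_discriminatory_separated_general {σ : ℝ → ℝ} (hσ : IsSigmoidal σ)
    (hσm : Measurable σ) (hσb : ∃ C, ∀ z, |σ z| ≤ C)
    {μ ν : Measure (E × F)} [IsFiniteMeasure μ] [IsFiniteMeasure ν]
    (h : ∀ (L : StrongDual ℝ E) (M : StrongDual ℝ F) (b c : ℝ),
      ∫ p, σ (L p.1 + b) * σ (M p.2 + c) ∂μ = ∫ p, σ (L p.1 + b) * σ (M p.2 + c) ∂ν) :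
    μ = ν := by
  refine measure_ext_of_map_prodMap_strongDual fun L M => ?_
  refine hσ.measure_ext_of_integral_mul hσm hσb fun k l b c => ?_
  have hmeas : Measurable fun q : ℝ × ℝ => σ (k * q.1 + b) * σ (l * q.2 + c) := by fun_prop
  have hLM : Measurable (L.prodMap M) := (L.prodMap M).measurable
  rw [integral_map hLM.aemeasurable hmeas.aestronglyMeasurable,
    integral_map hLM.aemeasurable hmeas.aestronglyMeasurable]
  exact h (k • L) (l • M) b c

end Dual

theorem strongDual_pi_apply_eq_sum {ι R : Type*} [Fintype ι] [DecidableEq ι] [CommSemiring R]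
    [TopologicalSpace R] (L : StrongDual R (ι → R)) (x : ι → R) :
    L x = ∑ i, L (Pi.single i 1) * x i := by
  simpa [mul_comm] using congrArg L (pi_eq_sum_univ' x)

/-- Any bounded, Borel-measurable sigmoidal function is discriminatory in the
separated (product) sense: if all the product integrals of
`σ(⟨kˣ,x⟩ + bˣ) · σ(kᵗ t + bᵗ)` against a finite signed regular Borel measure `μ`
on `Ω × [0,T]` vanish, then `μ = 0`.  The finite signed measure `μ` is represented
by its Jordan decomposition `μ = μ₁ - μ₂` as a difference of two finite (regular)
measures supported on `Ω ×ˢ [0,T]`, and `μ = 0` means `μ₁ = μ₂`.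
In particular (since continuous functions are Borel measurable and a continuous
sigmoidal function is bounded on `ℝ` by its limits), every continuous sigmoidal
function is discriminatory in this sense. -/
theorem sigmoidal_discriminatory_separated {d : ℕ} (Ω : Set (Fin d → ℝ)) (hΩ : IsCompact Ω)
    (T : ℝ) (hT : 0 < T)
    (σ : ℝ → ℝ) (hσm : Measurable σ) (hσb : ∃ C, ∀ z, |σ z| ≤ C)
    (hσ1 : Tendsto σ atTop (nhds 1)) (hσ0 : Tendsto σ atBot (nhds 0))
    (μ₁ μ₂ : Measure ((Fin d → ℝ) × ℝ)) [IsFiniteMeasure μ₁] [IsFiniteMeasure μ₂]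
    [μ₁.Regular] [μ₂.Regular]
    (hs₁ : μ₁ (Ω ×ˢ Set.Icc (0 : ℝ) T)ᶜ = 0) (hs₂ : μ₂ (Ω ×ˢ Set.Icc (0 : ℝ) T)ᶜ = 0)
    (hzero : ∀ (kx : Fin d → ℝ) (kt bx bt : ℝ),
      ∫ p, σ ((∑ i, kx i * p.1 i) + bx) * σ (kt * p.2 + bt) ∂μ₁ =
      ∫ p, σ ((∑ i, kx i * p.1 i) + bx) * σ (kt * p.2 + bt) ∂μ₂) :
    μ₁ = μ₂ := by
  refine sigmoidal_discriminatory_separated_general ⟨hσ1, hσ0⟩ hσm hσb fun L M b c => ?_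
  have hM (t : ℝ) : M t = M 1 * t := by simpa [mul_comm] using M.map_smul t 1
  simpa only [← strongDual_pi_apply_eq_sum, ← hM] using
    hzero (fun i => L (Pi.single i 1)) (M 1) b c
end

section
/- Let Ω ⊂ ℝ^d be a compact set and T > 0, and let σ : ℝ → ℝ be any continuous sigmoidal function. Then the set of finite sums of separated (product) form G(x,t) = Σ_{j=1}^N u_j σ(⟨k_j^x, x⟩ + b_j^x) σ(k_j^t t + b_j^t), with N ∈ ℕ, u_j, k_j^t, b_j^x, b_j^t ∈ ℝ and k_j^x ∈ ℝ^d, is dense in C(Ω × [0,T]) with respect to the supremum norm. -/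
open Filter

/-!
Off a neighbourhood of its centre, a steep copy `y ↦ σ (k * y)` of a sigmoidal function is close to
the Heaviside step, so steep ridges of a feature `ℓ` add up to staircases in `ℓ`. At every point at
most one step of the staircase lies in its transition zone, which makes the approximation of
`g ∘ ℓ` uniform when `σ` is bounded and `g` is continuous; in particular `exp ∘ ℓ` can be
approximated. The exponentials of continuous linear forms on `E × F` are closed under
multiplication and separate points, so by Stone–Weierstrass their span is dense. Finally
`exp (L (x, t)) = exp (L (x, 0)) * exp (L (0, t))` is separated, and uniform approximations of
bounded factors multiply.
-/

section UniformClosure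

variable {α : Type*} {K : Set α}

/-- The functions that are uniform limits on `K` of elements of `V`. The functions are total, and
nothing is asked of them outside `K`. -/
def uniformClosureOn (K : Set α) (V : Submodule ℝ (α → ℝ)) : Submodule ℝ (α → ℝ) where
  carrier := {f | ∀ ε > 0, ∃ g ∈ V, ∀ x ∈ K, |g x - f x| < ε}
  zero_mem' ε hε := ⟨0, V.zero_mem, fun _ _ => by simpa using hε⟩
  add_mem' {f₁ f₂} hf₁ hf₂ ε hε := by
    obtain ⟨g₁, hg₁, h₁⟩ := hf₁ (ε / 2) (half_pos hε)
    obtain ⟨g₂, hg₂, h₂⟩ := hf₂ (ε / 2) (half_pos hε)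
    refine ⟨g₁ + g₂, V.add_mem hg₁ hg₂, fun x hx => ?_⟩
    calc |(g₁ + g₂) x - (f₁ + f₂) x| = |(g₁ x - f₁ x) + (g₂ x - f₂ x)| := by
          simp only [Pi.add_apply]; ring_nf
      _ ≤ |g₁ x - f₁ x| + |g₂ x - f₂ x| := abs_add_le _ _
      _ < ε := by linarith [h₁ x hx, h₂ x hx]
  smul_mem' c f hf ε hε := by
    obtain ⟨g, hg, h⟩ := hf (ε / (|c| + 1)) (by positivity)
    refine ⟨c • g, V.smul_mem c hg, fun x hx => ?_⟩
    calc |(c • g) x - (c • f) x| = |c| * |g x - f x| := by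
          simp only [Pi.smul_apply, smul_eq_mul, ← mul_sub, abs_mul]
      _ ≤ |c| * (ε / (|c| + 1)) := by gcongr; exact (h x hx).le
      _ < (|c| + 1) * (ε / (|c| + 1)) := by gcongr; exact lt_add_one _
      _ = ε := by field_simp

theorem mem_uniformClosureOn {V : Submodule ℝ (α → ℝ)} {f : α → ℝ} :
    f ∈ uniformClosureOn K V ↔ ∀ ε > 0, ∃ g ∈ V, ∀ x ∈ K, |g x - f x| < ε :=
  Iff.rfl

theorem uniformClosureOn_le {V W : Submodule ℝ (α → ℝ)} (h : V ≤ uniformClosureOn K W) :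
    uniformClosureOn K V ≤ uniformClosureOn K W := by
  intro f hf ε hε
  obtain ⟨g, hg, hfg⟩ := hf (ε / 2) (half_pos hε)
  obtain ⟨w, hw, hgw⟩ := h hg (ε / 2) (half_pos hε)
  refine ⟨w, hw, fun x hx => ?_⟩
  linarith [abs_sub_le (w x) (g x) (f x), hfg x hx, hgw x hx]

theorem mul_mem_uniformClosureOn {V W : Submodule ℝ (α → ℝ)} {f g : α → ℝ}
    (hf : f ∈ uniformClosureOn K V) (hg : g ∈ uniformClosureOn K W)
    (hfb : Bornology.IsBounded (f '' K)) (hgb : Bornology.IsBounded (g '' K)) :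
    f * g ∈ uniformClosureOn K (V * W) := by
  intro ε hε
  obtain ⟨A, hA, hfA⟩ := hfb.exists_pos_norm_le
  obtain ⟨B, hB, hgB⟩ := hgb.exists_pos_norm_le
  simp only [Set.forall_mem_image, Real.norm_eq_abs] at hfA hgB
  obtain ⟨v, hv, hvf⟩ := hf (min 1 (ε / (2 * B))) (by positivity)
  obtain ⟨w, hw, hwg⟩ := hg (ε / (2 * (A + 1))) (by positivity)
  refine ⟨v * w, Submodule.mul_mem_mul hv hw, fun x hx => ?_⟩
  have hv_bound : |v x| ≤ A + 1 := by
    linarith [abs_sub_abs_le_abs_sub (v x) (f x), hfA hx, hvf x hx,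
      min_le_left 1 (ε / (2 * B))]
  have hleft : |v x| * |w x - g x| < ε / 2 :=
    calc |v x| * |w x - g x| ≤ (A + 1) * |w x - g x| := by gcongr
      _ < (A + 1) * (ε / (2 * (A + 1))) := by gcongr; exact hwg x hx
      _ = ε / 2 := by field_simp
  have hright : |v x - f x| * |g x| ≤ ε / 2 :=
    calc |v x - f x| * |g x| ≤ ε / (2 * B) * B := by
          gcongr
          exacts [(hvf x hx).le.trans (min_le_right _ _), hgB hx]
      _ = ε / 2 := by field_simp
  calc |(v * w) x - (f * g) x| = |v x * (w x - g x) + (v x - f x) * g x| := by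
        simp only [Pi.mul_apply]; ring_nf
    _ ≤ |v x| * |w x - g x| + |v x - f x| * |g x| := by
        rw [← abs_mul, ← abs_mul]; exact abs_add_le _ _
    _ < ε := by linarith

theorem mem_uniformClosureOn_of_separatesPoints [TopologicalSpace α] (hK : IsCompact K)
    {A : Subalgebra ℝ (α → ℝ)}
    (hA : ∀ x ∈ K, ∀ y ∈ K, x ≠ y → ∃ g ∈ A, ContinuousOn g K ∧ g x ≠ g y)
    {f : α → ℝ} (hf : ContinuousOn f K) :
    f ∈ uniformClosureOn K (Subalgebra.toSubmodule A) := by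
  have : CompactSpace K := isCompact_iff_compactSpace.1 hK
  let restrictHom : (α → ℝ) →ₐ[ℝ] (K → ℝ) := AlgHom.pi fun x => Pi.evalAlgHom ℝ _ (x : α)
  let B : Subalgebra ℝ C(K, ℝ) := (A.map restrictHom).comap (ContinuousMap.coeFnAlgHom ℝ)
  have hB : B.SeparatesPoints := by
    intro x y hxy
    obtain ⟨g, hgA, hgc, hg⟩ := hA x x.2 y y.2 (Subtype.coe_ne_coe.2 hxy)
    exact ⟨_, ⟨⟨K.domRestrict g, hgc.domRestrict⟩, ⟨g, hgA, rfl⟩, rfl⟩, hg⟩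
  intro ε hε
  obtain ⟨⟨h, g, hgA, hgh⟩, hfh⟩ :=
    ContinuousMap.exists_mem_subalgebra_near_continuous_of_separatesPoints
      B hB (K.domRestrict f) hf.domRestrict ε hε
  refine ⟨g, hgA, fun x hx => ?_⟩
  have hgx : g x = h ⟨x, hx⟩ := congrFun hgh ⟨x, hx⟩
  simpa [hgx, Set.domRestrict_apply] using hfh ⟨x, hx⟩

end UniformClosure

section Sigmoidal

/-- A function on the line is sigmoidal if it tends to `1` at `+∞` and to `0` at `-∞`; neither
continuity nor boundedness is included. -/
structure IsSigmoidal_s3 (σ : ℝ → ℝ) : Prop where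
  tendsto_atTop : Tendsto σ atTop (nhds 1)
  tendsto_atBot : Tendsto σ atBot (nhds 0)

theorem isBounded_range_of_tendsto_atTop_atBot {X : Type*} [PseudoMetricSpace X] {f : ℝ → X}
    {a b : X} (hf : Continuous f) (ha : Tendsto f atTop (nhds a)) (hb : Tendsto f atBot (nhds b)) :
    Bornology.IsBounded (Set.range f) := by
  obtain ⟨u, hu⟩ := eventually_atTop.1 (ha.eventually (Metric.ball_mem_nhds a one_pos))
  obtain ⟨v, hv⟩ := eventually_atBot.1 (hb.eventually (Metric.ball_mem_nhds b one_pos))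
  refine (((isCompact_Icc (a := v) (b := u)).image hf).isBounded.union
    (Metric.isBounded_ball.union Metric.isBounded_ball)).subset
    (t := f '' Set.Icc v u ∪ (Metric.ball a 1 ∪ Metric.ball b 1)) ?_
  rintro _ ⟨y, rfl⟩
  rcases le_total u y with huy | hyu
  · exact .inr (.inl (hu y huy))
  rcases le_total y v with hyv | hvy
  · exact .inr (.inr (hv y hyv))
  · exact .inl ⟨y, ⟨hvy, hyu⟩, rfl⟩

theorem sum_range_sub_mul_step {R : Type*} [Ring R] (c : ℕ → R) {m n : ℕ} (hmn : m ≤ n) :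
    ∑ i ∈ Finset.range n, (c (i + 1) - c i) * (if i < m then 1 else 0) = c m - c 0 := by
  simp only [mul_ite, mul_one, mul_zero]
  rw [← Finset.sum_filter, ← Finset.sum_range_sub]
  congr 1
  ext i
  simp only [Finset.mem_filter, Finset.mem_range]
  omega

theorem exists_nat_abs_sub_le_of_continuousOn_Icc {g : ℝ → ℝ} {a b η : ℝ} (hab : a ≤ b)
    (hg : ContinuousOn g (Set.Icc a b)) (hη : 0 < η) :
    ∃ n : ℕ, 0 < n ∧ ∀ x ∈ Set.Icc (0 : ℝ) n, ∀ y ∈ Set.Icc (0 : ℝ) n, |x - y| ≤ 1 →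
      |g (a + (b - a) / n * x) - g (a + (b - a) / n * y)| ≤ η := by
  obtain ⟨δ, hδ, hgδ⟩ := Metric.uniformContinuousOn_iff.1
    (isCompact_Icc.uniformContinuousOn_of_continuous hg) η hη
  obtain ⟨n, hn⟩ := exists_nat_gt ((b - a) / δ)
  have hn0 : (0 : ℝ) < n := (div_nonneg (sub_nonneg.2 hab) hδ.le).trans_lt hn
  have hw : 0 ≤ (b - a) / n := div_nonneg (sub_nonneg.2 hab) hn0.le
  have hmaps : ∀ x ∈ Set.Icc (0 : ℝ) n, a + (b - a) / n * x ∈ Set.Icc a b := by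
    rintro x ⟨hx0, hxn⟩
    have hle : (b - a) / n * x ≤ (b - a) / n * n := by gcongr
    rw [div_mul_cancel₀ _ hn0.ne'] at hle
    exact ⟨le_add_of_nonneg_right (mul_nonneg hw hx0), by linarith⟩
  refine ⟨n, Nat.cast_pos.1 hn0, fun x hx y hy hxy => (hgδ _ (hmaps x hx) _ (hmaps y hy) ?_).le⟩
  calc dist (a + (b - a) / n * x) (a + (b - a) / n * y) = (b - a) / n * |x - y| := by
        rw [dist_add_left, Real.dist_eq, ← mul_sub, abs_mul, abs_of_nonneg hw]
    _ ≤ (b - a) / n * 1 := by gcongr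
    _ < δ := by rw [mul_one]; exact (div_lt_comm₀ hδ hn0).1 hn

namespace IsSigmoidal_s3

variable {σ : ℝ → ℝ} {C : ℝ}

theorem exists_abs_sub_step_lt (hσ : IsSigmoidal_s3 σ) {r δ : ℝ} (hr : 0 < r) (hδ : 0 < δ) :
    ∃ k : ℝ, ∀ y, r ≤ |y| → |σ (k * y) - if 0 < y then 1 else 0| < δ := by
  obtain ⟨a, ha⟩ :=
    eventually_atTop.1 (hσ.tendsto_atTop.eventually (Metric.ball_mem_nhds 1 hδ))
  obtain ⟨b, hb⟩ :=
    eventually_atBot.1 (hσ.tendsto_atBot.eventually (Metric.ball_mem_nhds 0 hδ))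
  obtain ⟨k, hk, hak, hbk⟩ : ∃ k, 0 ≤ k ∧ a ≤ k * r ∧ -b ≤ k * r := by
    refine ⟨(|a| + |b|) / r, by positivity, ?_⟩
    rw [div_mul_cancel₀ _ hr.ne']
    exact ⟨by linarith [le_abs_self a, abs_nonneg b], by linarith [neg_abs_le b, abs_nonneg a]⟩
  refine ⟨k, fun y hy => ?_⟩
  split_ifs with hy0
  · rw [abs_of_pos hy0] at hy
    exact ha _ (hak.trans (by gcongr))
  · rw [abs_of_nonpos (not_lt.1 hy0)] at hy
    have : k * r ≤ k * -y := by gcongr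
    exact hb _ (by linarith)

theorem exists_abs_sub_floor_step_lt (hσ : IsSigmoidal_s3 σ) {δ : ℝ} (hδ : 0 < δ) :
    ∃ k : ℝ, ∀ s, 0 ≤ s → ∀ i : ℕ, i ≠ ⌊s⌋₊ →
      |σ (k * (s - i - 1 / 2)) - if i < ⌊s⌋₊ then 1 else 0| < δ := by
  obtain ⟨k, hk⟩ := hσ.exists_abs_sub_step_lt (r := 1 / 2) (by norm_num) hδ
  refine ⟨k, fun s hs i hi => ?_⟩
  obtain ⟨hfar, hsign⟩ : 1 / 2 ≤ |s - i - 1 / 2| ∧ (0 < s - i - 1 / 2 ↔ i < ⌊s⌋₊) := by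
    rcases lt_or_gt_of_ne hi with hlt | hgt
    · have his : (i : ℝ) + 1 ≤ s := by
        exact_mod_cast (Nat.le_floor_iff hs).1 (Nat.succ_le_of_lt hlt)
      exact ⟨le_abs.2 (.inl (by linarith)), iff_of_true (by linarith) hlt⟩
    · have his : s < i := (Nat.floor_lt hs).1 hgt
      exact ⟨le_abs.2 (.inr (by linarith)), iff_of_false (by linarith) hgt.not_gt⟩
  simpa only [hsign] using hk _ hfar

theorem exists_sum_abs_sub_step_le (hσ : IsSigmoidal_s3 σ) (hC : ∀ y, |σ y| ≤ C) (n : ℕ) :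
    ∃ k : ℝ, ∀ s, 0 ≤ s →
      ∑ i ∈ Finset.range n, |σ (k * (s - i - 1 / 2)) - if i < ⌊s⌋₊ then 1 else 0| ≤ C + 2 := by
  have hδ : (0 : ℝ) < 1 / (n + 1) := by positivity
  obtain ⟨k, hfar⟩ := hσ.exists_abs_sub_floor_step_lt hδ
  refine ⟨k, fun s hs => ?_⟩
  have hC0 : 0 ≤ C := (abs_nonneg _).trans (hC 0)
  have hnear : ∀ i : ℕ, |σ (k * (s - i - 1 / 2)) - if i < ⌊s⌋₊ then 1 else 0| ≤ C + 1 :=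
    fun i => (abs_sub _ _).trans (add_le_add (hC _) (by split_ifs <;> simp))
  calc ∑ i ∈ Finset.range n, |σ (k * (s - i - 1 / 2)) - if i < ⌊s⌋₊ then 1 else 0|
      ≤ ∑ i ∈ Finset.range n, (1 / ((n : ℝ) + 1) + if i = ⌊s⌋₊ then C + 1 else 0) := by
        refine Finset.sum_le_sum fun i _ => ?_
        by_cases hi : i = ⌊s⌋₊
        · rw [if_pos (c := i = ⌊s⌋₊) hi]
          linarith [hnear i]
        · rw [if_neg (c := i = ⌊s⌋₊) hi]
          linarith [hfar s hs i hi]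
    _ = n * (1 / ((n : ℝ) + 1)) + if ⌊s⌋₊ ∈ Finset.range n then C + 1 else 0 := by
        rw [Finset.sum_add_distrib, Finset.sum_const, Finset.card_range, nsmul_eq_mul,
          Finset.sum_ite_eq']
    _ ≤ 1 + (C + 1) := by
        gcongr
        · rw [mul_one_div, div_le_one (by positivity)]
          linarith
        · split_ifs <;> linarith
    _ = C + 2 := by ring

theorem exists_staircase_abs_sub_le (hσ : IsSigmoidal_s3 σ) (hC : ∀ y, |σ y| ≤ C)
    {g : ℝ → ℝ} {n : ℕ} {η : ℝ}
    (hg : ∀ x ∈ Set.Icc (0 : ℝ) n, ∀ y ∈ Set.Icc (0 : ℝ) n, |x - y| ≤ 1 → |g x - g y| ≤ η) :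
    ∃ k : ℝ, ∀ s ∈ Set.Icc (0 : ℝ) n,
      |g 0 + ∑ i ∈ Finset.range n, (g (i + 1 : ℕ) - g i) * σ (k * (s - i - 1 / 2)) - g s| ≤
        η * (C + 3) := by
  obtain ⟨k, hk⟩ := hσ.exists_sum_abs_sub_step_le hC n
  refine ⟨k, fun s hs => ?_⟩
  set step : ℕ → ℝ := fun i => if i < ⌊s⌋₊ then 1 else 0
  have hη : 0 ≤ η := by simpa using hg s hs s hs (by simp)
  have hnode : ∀ i : ℕ, i ≤ n → (i : ℝ) ∈ Set.Icc (0 : ℝ) n := fun i hi =>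
    ⟨i.cast_nonneg, Nat.cast_le.2 hi⟩
  have hfloor : ⌊s⌋₊ ≤ n := Nat.floor_le_of_le hs.2
  have hjump : ∀ i ∈ Finset.range n, |g (i + 1 : ℕ) - g i| ≤ η := fun i hi =>
    hg _ (hnode _ (Finset.mem_range.1 hi)) _ (hnode _ (Finset.mem_range.1 hi).le) (by simp)
  have htelescope : ∑ i ∈ Finset.range n, (g (i + 1 : ℕ) - g i) * step i = g ⌊s⌋₊ - g 0 := by
    simpa only [Nat.cast_zero] using sum_range_sub_mul_step (fun i : ℕ => g i) hfloor
  have hround : |g ⌊s⌋₊ - g s| ≤ η := by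
    refine hg _ (hnode _ hfloor) s hs ?_
    rw [abs_le]
    constructor <;> linarith [Nat.floor_le hs.1, Nat.lt_floor_add_one s]
  have hsteep : |∑ i ∈ Finset.range n,
      (g (i + 1 : ℕ) - g i) * (σ (k * (s - i - 1 / 2)) - step i)| ≤ η * (C + 2) :=
    calc _ ≤ ∑ i ∈ Finset.range n, η * |σ (k * (s - i - 1 / 2)) - step i| := by
          refine (Finset.abs_sum_le_sum_abs _ _).trans (Finset.sum_le_sum fun i hi => ?_)
          rw [abs_mul]
          gcongr
          exact hjump i hi
      _ ≤ η * (C + 2) := by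
          rw [← Finset.mul_sum]
          gcongr
          exact hk s hs.1
  simp only [mul_sub (g _ - g _) (σ _), Finset.sum_sub_distrib, htelescope] at hsteep
  calc _ = |(∑ i ∈ Finset.range n, (g (i + 1 : ℕ) - g i) * σ (k * (s - i - 1 / 2)) -
          (g ⌊s⌋₊ - g 0)) + (g ⌊s⌋₊ - g s)| := by congr 1; ring
    _ ≤ η * (C + 2) + η := (abs_add_le _ _).trans (add_le_add hsteep hround)
    _ = η * (C + 3) := by ring

theorem const_mem (hσ : IsSigmoidal_s3 σ) {α : Type*} {V : Submodule ℝ (α → ℝ)}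
    (hV : ∀ b, (fun _ => σ b) ∈ V) (c : ℝ) : (fun _ => c) ∈ V := by
  obtain ⟨b, hb⟩ := (hσ.tendsto_atTop.eventually_ne one_ne_zero).exists
  convert V.smul_mem (c / σ b) (hV b) using 1
  ext
  simp [hb]

theorem comp_mem_uniformClosureOn (hσ : IsSigmoidal_s3 σ) (hσb : Bornology.IsBounded (Set.range σ))
    {α : Type*} {K : Set α} {ℓ : α → ℝ} (hℓ : Bornology.IsBounded (ℓ '' K))
    {V : Submodule ℝ (α → ℝ)} (hV : ∀ a b : ℝ, (fun x => σ (a * ℓ x + b)) ∈ V)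
    {g : ℝ → ℝ} (hg : Continuous g) : (fun x => g (ℓ x)) ∈ uniformClosureOn K V := by
  intro ε hε
  obtain ⟨C, hC0, hC⟩ := hσb.exists_pos_norm_le
  obtain ⟨R, hR, hℓR⟩ := hℓ.exists_pos_norm_le
  simp only [Set.forall_mem_range, Set.forall_mem_image, Real.norm_eq_abs] at hC hℓR
  obtain ⟨n, hn, hgn⟩ := exists_nat_abs_sub_le_of_continuousOn_Icc (η := ε / (2 * (C + 3)))
    (neg_le_self hR.le) hg.continuousOn (by positivity)
  obtain ⟨k, hk⟩ := hσ.exists_staircase_abs_sub_le hC hgn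
  have hn0 : (0 : ℝ) < n := Nat.cast_pos.2 hn
  set w : ℝ := (R - -R) / n with hw
  have hw0 : 0 < w := div_pos (by linarith) hn0
  refine ⟨(fun _ => g (-R + w * 0)) + ∑ i ∈ Finset.range n,
    (g (-R + w * (i + 1 : ℕ)) - g (-R + w * i)) •
      fun x => σ (k / w * ℓ x + k * (R / w - i - 1 / 2)),
    V.add_mem (hσ.const_mem (fun b => by simpa using hV 0 b) _)
      (V.sum_mem fun i _ => V.smul_mem _ (hV _ _)), fun x hx => ?_⟩
  obtain ⟨hxl, hxr⟩ := abs_le.1 (hℓR hx)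
  have hmem : (ℓ x + R) / w ∈ Set.Icc (0 : ℝ) n := by
    refine ⟨div_nonneg (by linarith) hw0.le, (div_le_iff₀ hw0).2 ?_⟩
    rw [hw, mul_div_cancel₀ _ hn0.ne']
    linarith
  have hstair := hk _ hmem
  have harg : ∀ i : ℕ, k * ((ℓ x + R) / w - i - 1 / 2) =
      k / w * ℓ x + k * (R / w - i - 1 / 2) := fun i => by ring
  simp only [harg, mul_div_cancel₀ _ hw0.ne', neg_add_cancel_comm_assoc] at hstair
  have hhalf : ε / (2 * (C + 3)) * (C + 3) = ε / 2 := by field_simp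
  simp only [Pi.add_apply, Finset.sum_apply, Pi.smul_apply, smul_eq_mul]
  linarith

end IsSigmoidal_s3

end Sigmoidal

section Exponentials

theorem separatingDual_prod {R E F : Type*} [Ring R] [TopologicalSpace R]
    [AddCommGroup E] [TopologicalSpace E] [Module R E] [SeparatingDual R E]
    [AddCommGroup F] [TopologicalSpace F] [Module R F] [SeparatingDual R F] :
    SeparatingDual R (E × F) := by
  refine ⟨fun p hp => ?_⟩
  by_cases hp₁ : p.1 = 0
  · obtain ⟨m, hm⟩ := SeparatingDual.exists_ne_zero (R := R) fun hp₂ => hp (Prod.ext hp₁ hp₂)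
    exact ⟨m.comp (ContinuousLinearMap.snd R E F), hm⟩
  · obtain ⟨ℓ, hℓ⟩ := SeparatingDual.exists_ne_zero (R := R) hp₁
    exact ⟨ℓ.comp (ContinuousLinearMap.fst R E F), hℓ⟩

variable {E : Type*} [AddCommGroup E] [Module ℝ E] [TopologicalSpace E]

/-- The multiplicative monoid of exponentials of continuous linear forms, the generators to which
Stone–Weierstrass is applied. -/
def expDual (E : Type*) [AddCommGroup E] [Module ℝ E] [TopologicalSpace E] :
    Submonoid (E → ℝ) where
  carrier := Set.range fun (L : StrongDual ℝ E) x => Real.exp (L x)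
  one_mem' := ⟨0, by ext; simp⟩
  mul_mem' := by
    rintro _ _ ⟨L, rfl⟩ ⟨M, rfl⟩
    exact ⟨L + M, by ext; simp [Real.exp_add]⟩

theorem mem_uniformClosureOn_span_expDual [SeparatingDual ℝ E] {K : Set E} (hK : IsCompact K)
    {f : E → ℝ} (hf : ContinuousOn f K) :
    f ∈ uniformClosureOn K (Submodule.span ℝ (expDual E)) := by
  rw [← Submonoid.closure_eq (expDual E), ← Algebra.adjoin_eq_span]
  refine mem_uniformClosureOn_of_separatesPoints hK (fun x _ y _ hxy => ?_) hf
  obtain ⟨L, hL⟩ := SeparatingDual.exists_separating_of_ne (R := ℝ) hxy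
  exact ⟨_, Algebra.subset_adjoin (Set.mem_range_self L), by fun_prop, Real.exp_injective.ne hL⟩

end Exponentials

section Ridge

variable {α E F : Type*} [AddCommGroup E] [Module ℝ E] [TopologicalSpace E]
  [AddCommGroup F] [Module ℝ F] [TopologicalSpace F]

/-- The span of the ridge functions `x ↦ σ (ℓ (π x) + b)`, with `ℓ` a continuous linear form. Taking
for `π` the coordinates of a product makes the sums of separated form the elements of
`ridgeSpan σ Prod.fst * ridgeSpan τ Prod.snd`. -/
def ridgeSpan (σ : ℝ → ℝ) (π : α → E) : Submodule ℝ (α → ℝ) :=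
  Submodule.span ℝ (Set.range fun (q : StrongDual ℝ E × ℝ) x => σ (q.1 (π x) + q.2))

theorem exists_eq_sum_of_mem_ridgeSpan_mul {σ τ : ℝ → ℝ} {π : α → E} {ρ : α → F} {h : α → ℝ}
    (hh : h ∈ ridgeSpan σ π * ridgeSpan τ ρ) :
    ∃ (N : ℕ) (u : Fin N → ℝ) (ℓ : Fin N → StrongDual ℝ E) (m : Fin N → StrongDual ℝ F)
      (a b : Fin N → ℝ),
      ∀ x, h x = ∑ j, u j * (σ (ℓ j (π x) + a j) * τ (m j (ρ x) + b j)) := by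
  rw [ridgeSpan, ridgeSpan, Submodule.span_mul_span] at hh
  obtain ⟨N, u, r, rfl⟩ := Submodule.mem_span_set'.1 hh
  choose v hv w hw hvw using fun j => Set.mem_mul.1 (r j).2
  choose q hq using hv
  choose q' hq' using hw
  refine ⟨N, u, fun j => (q j).1, fun j => (q' j).1, fun j => (q j).2, fun j => (q' j).2,
    fun x => ?_⟩
  simp [← hvw, ← hq, ← hq']

theorem IsSigmoidal_s3.comp_mem_uniformClosureOn_ridgeSpan {σ : ℝ → ℝ} (hσ : IsSigmoidal_s3 σ)
    (hσb : Bornology.IsBounded (Set.range σ)) {K : Set α} {π : α → E} {ℓ : StrongDual ℝ E}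
    (hℓ : Bornology.IsBounded ((fun x => ℓ (π x)) '' K)) {g : ℝ → ℝ} (hg : Continuous g) :
    (fun x => g (ℓ (π x))) ∈ uniformClosureOn K (ridgeSpan σ π) :=
  hσ.comp_mem_uniformClosureOn hσb hℓ
    (fun a b => Submodule.subset_span (Set.mem_range.2 ⟨(a • ℓ, b), by simp⟩)) hg

theorem span_expDual_le_uniformClosureOn_ridgeSpan_mul {σ τ : ℝ → ℝ}
    (hσ : IsSigmoidal_s3 σ) (hσb : Bornology.IsBounded (Set.range σ))
    (hτ : IsSigmoidal_s3 τ) (hτb : Bornology.IsBounded (Set.range τ))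
    {K : Set (E × F)} (hK : IsCompact K) :
    Submodule.span ℝ (expDual (E × F)) ≤
      uniformClosureOn K (ridgeSpan σ Prod.fst * ridgeSpan τ Prod.snd) := by
  refine Submodule.span_le.2 ?_
  rintro _ ⟨L, rfl⟩
  let ℓ : StrongDual ℝ E := L.comp (.inl ℝ E F)
  let m : StrongDual ℝ F := L.comp (.inr ℝ E F)
  have hsplit : (fun p => Real.exp (L p)) =
      (fun p : E × F => Real.exp (ℓ p.1)) * fun p => Real.exp (m p.2) := by
    ext p
    simp [ℓ, m, ← Real.exp_add, ← map_add]
  have hbounded {φ : E × F → ℝ} (hφ : Continuous φ) : Bornology.IsBounded (φ '' K) :=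
    (hK.image hφ).isBounded
  simp only [hsplit]
  exact mul_mem_uniformClosureOn
    (hσ.comp_mem_uniformClosureOn_ridgeSpan hσb (hbounded (by fun_prop)) Real.continuous_exp)
    (hτ.comp_mem_uniformClosureOn_ridgeSpan hτb (hbounded (by fun_prop)) Real.continuous_exp)
    (hbounded (by fun_prop)) (hbounded (by fun_prop))

theorem sov_dense_general [SeparatingDual ℝ E] [SeparatingDual ℝ F] {σ τ : ℝ → ℝ}
    (hσ : IsSigmoidal_s3 σ) (hσb : Bornology.IsBounded (Set.range σ))
    (hτ : IsSigmoidal_s3 τ) (hτb : Bornology.IsBounded (Set.range τ))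
    {K : Set (E × F)} (hK : IsCompact K) {f : E × F → ℝ} (hf : ContinuousOn f K)
    {ε : ℝ} (hε : 0 < ε) :
    ∃ (N : ℕ) (u : Fin N → ℝ) (ℓ : Fin N → StrongDual ℝ E) (m : Fin N → StrongDual ℝ F)
      (a b : Fin N → ℝ), ∀ p ∈ K,
        |∑ j, u j * (σ (ℓ j p.1 + a j) * τ (m j p.2 + b j)) - f p| < ε := by
  have : SeparatingDual ℝ (E × F) := separatingDual_prod
  have hmem : f ∈ uniformClosureOn K (ridgeSpan σ Prod.fst * ridgeSpan τ Prod.snd) :=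
    uniformClosureOn_le (span_expDual_le_uniformClosureOn_ridgeSpan_mul hσ hσb hτ hτb hK)
      (mem_uniformClosureOn_span_expDual hK hf)
  obtain ⟨h, hh, hfh⟩ := mem_uniformClosureOn.1 hmem ε hε
  obtain ⟨N, u, ℓ, m, a, b, hsum⟩ := exists_eq_sum_of_mem_ridgeSpan_mul hh
  exact ⟨N, u, ℓ, m, a, b, fun p hp => hsum p ▸ hfh p hp⟩

end Ridge

/-- Density of separation-of-variables (SoV) space-time random-feature sums for a
continuous sigmoidal activation `σ` in `C(Ω × [0,T])` with the supremum norm. -/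
theorem sov_dense {d : ℕ} (Ω : Set (Fin d → ℝ)) (hΩ : IsCompact Ω) (T : ℝ) (hT : 0 < T)
    (σ : ℝ → ℝ) (hσc : Continuous σ)
    (hσ1 : Tendsto σ atTop (nhds 1)) (hσ0 : Tendsto σ atBot (nhds 0))
    (f : ((Fin d → ℝ) × ℝ) → ℝ) (hf : ContinuousOn f (Ω ×ˢ Set.Icc 0 T))
    (ε : ℝ) (hε : 0 < ε) :
    ∃ (N : ℕ) (u : Fin N → ℝ) (kx : Fin N → (Fin d → ℝ)) (kt : Fin N → ℝ)
      (bx : Fin N → ℝ) (bt : Fin N → ℝ),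
      ∀ x ∈ Ω, ∀ t ∈ Set.Icc (0 : ℝ) T,
        |(∑ j, u j * (σ ((∑ i, kx j i * x i) + bx j) * σ (kt j * t + bt j))) - f (x, t)| < ε := by
  have hσ : IsSigmoidal_s3 σ := ⟨hσ1, hσ0⟩
  have hσb := isBounded_range_of_tendsto_atTop_atBot hσc hσ1 hσ0
  obtain ⟨N, u, ℓ, m, bx, bt, h⟩ :=
    sov_dense_general hσ hσb hσ hσb (hΩ.prod isCompact_Icc) hf hε
  refine ⟨N, u, fun j i => ℓ j (Pi.single i 1), fun j => m j 1, bx, bt, fun x hx t ht => ?_⟩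
  have hℓ (j) : ∑ i, ℓ j (Pi.single i 1) * x i = ℓ j x := by
    simp only [mul_comm _ (x _), ← smul_eq_mul, ← map_smul, ← map_sum, ← Pi.single_smul]
    simp only [smul_eq_mul, mul_one, Finset.univ_sum_single]
  have hm (j) : m j 1 * t = m j t := by
    simpa [mul_comm] using ((m j).map_smul t 1).symm
  simpa only [hℓ, hm] using h (x, t) ⟨hx, ht⟩
end

section
/- Let Ω ⊂ ℝ^d be a compact set and T > 0. The set of finite sums of separated (product) form G(x,t) = Σ_{j=1}^N u_j tanh(⟨k_j^x, x⟩ + b_j^x) tanh(k_j^t t + b_j^t), with N ∈ ℕ, u_j, k_j^t, b_j^x, b_j^t ∈ ℝ and k_j^x ∈ ℝ^d, is dense in C(Ω × [0,T]) with respect to the supremum norm. -/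
/-!
Since `exp (2 * b) / 2 * (1 - tanh (y + b)) = (exp (2 * y) + exp (-2 * b))⁻¹`, letting `b → ∞` shows
that translates of `tanh ∘ φ` span a space whose uniform closure contains `exp (-2 * φ)`; dividing
by the diverging factor instead gives `tanh (φ + b) → 1`, so that closure contains the constants.
Multiplying two such limits, products of translates of `tanh ∘ φ` and `tanh ∘ ψ` approximate
`exp (-2 * (φ + ψ))`. These exponentials are closed under multiplication and separate points, so the
Stone-Weierstrass theorem applies.
-/

open Filter Topology
open scoped Pointwise

lemma continuous_real_tanh : Continuous Real.tanh := by
  simp only [funext Real.tanh_eq_sinh_div_cosh]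
  exact Real.continuous_sinh.div Real.continuous_cosh fun x ↦ (Real.cosh_pos x).ne'

lemma one_sub_tanh_eq (y : ℝ) : 1 - Real.tanh y = 2 / (Real.exp (2 * y) + 1) := by
  rw [Real.tanh_eq, Real.exp_neg, two_mul, Real.exp_add]
  field_simp
  ring

lemma exp_mul_one_sub_tanh_eq_inv (y b : ℝ) :
    Real.exp (2 * b) / 2 * (1 - Real.tanh (y + b)) =
      (Real.exp (2 * y) + Real.exp (-2 * b))⁻¹ := by
  rw [one_sub_tanh_eq, neg_mul, Real.exp_neg, mul_add, Real.exp_add]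
  field_simp

lemma abs_inv_add_sub_inv_le {𝕜 : Type*} [Field 𝕜] [LinearOrder 𝕜] [IsStrictOrderedRing 𝕜]
    {p s : 𝕜} (hp : 0 < p) (hs : 0 ≤ s) :
    |(p + s)⁻¹ - p⁻¹| ≤ s * p⁻¹ ^ 2 := by
  have hdiff : (p + s)⁻¹ - p⁻¹ = -(s * (p⁻¹ * (p + s)⁻¹)) := by
    field_simp
    ring
  rw [hdiff, abs_neg, abs_of_nonneg (by positivity), pow_two]
  gcongr
  exact le_add_of_nonneg_right hs

lemma abs_exp_mul_one_sub_tanh_sub_exp_le (y b : ℝ) :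
    |Real.exp (2 * b) / 2 * (1 - Real.tanh (y + b)) - Real.exp (-2 * y)| ≤
      Real.exp (-2 * b) * Real.exp (-2 * y) ^ 2 := by
  rw [exp_mul_one_sub_tanh_eq_inv, neg_mul 2 y, Real.exp_neg (2 * y)]
  exact abs_inv_add_sub_inv_le (Real.exp_pos _) (Real.exp_pos _).le

lemma tendsto_exp_neg_two_mul_atTop : Tendsto (fun b : ℝ ↦ Real.exp (-2 * b)) atTop (𝓝 0) :=
  Real.tendsto_exp_atBot.comp (tendsto_id.const_mul_atTop_of_neg (by norm_num))

lemma mul_mem_topologicalClosure_span_mul {R A : Type*} [CommSemiring R] [Semiring A] [Algebra R A]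
    [TopologicalSpace A] [IsTopologicalSemiring A] [ContinuousConstSMul R A] {S T : Set A} {g h : A}
    (hg : g ∈ (Submodule.span R S).topologicalClosure)
    (hh : h ∈ (Submodule.span R T).topologicalClosure) :
    g * h ∈ (Submodule.span R (S * T)).topologicalClosure := by
  rw [← Submodule.span_mul_span]
  exact map_mem_closure₂ continuous_mul hg hh fun _ ha _ hb ↦ Submodule.mul_mem_mul ha hb

lemma sum_apply_single_one_mul {R ι : Type*} [CommSemiring R] [TopologicalSpace R] [Fintype ι]
    [DecidableEq ι] (φ : StrongDual R (ι → R)) (x : ι → R) :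
    ∑ i, φ (Pi.single i 1) * x i = φ x := by
  conv_rhs => rw [pi_eq_sum_univ' x]
  simp [mul_comm]

lemma apply_one_mul {R : Type*} [CommSemiring R] [TopologicalSpace R] (ψ : StrongDual R R) (t : R) :
    ψ 1 * t = ψ t := by
  rw [mul_comm, ← smul_eq_mul, ← map_smul, smul_eq_mul, mul_one]

section ContinuousMaps

variable {X : Type*} [TopologicalSpace X]

/-- The function `x ↦ tanh (φ x + b)` as a continuous map: one neuron with pre-activation `φ` and
bias `b`. -/
noncomputable def tanhAdd (φ : C(X, ℝ)) (b : ℝ) : C(X, ℝ) :=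
  ⟨fun x ↦ Real.tanh (φ x + b), continuous_real_tanh.comp (by fun_prop)⟩

/-- The function `x ↦ exp (-2 * φ x)` as a continuous map: the limit of rescaled `tanh` translates.
The factor `-2` is the decay rate of `1 - tanh` at infinity. -/
noncomputable def expNegTwo (φ : C(X, ℝ)) : C(X, ℝ) :=
  ⟨fun x ↦ Real.exp (-2 * φ x), by fun_prop⟩

@[simp]
lemma expNegTwo_apply (φ : C(X, ℝ)) (x : X) : expNegTwo φ x = Real.exp (-2 * φ x) := rfl

lemma expNegTwo_zero : expNegTwo (0 : C(X, ℝ)) = 1 := by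
  ext x
  simp

lemma expNegTwo_add (φ ψ : C(X, ℝ)) : expNegTwo (φ + ψ) = expNegTwo φ * expNegTwo ψ := by
  ext x
  simp only [expNegTwo_apply, ContinuousMap.add_apply, ContinuousMap.mul_apply, mul_add,
    Real.exp_add]

/-- The functions `exp (-2 * φ)` with `φ ∈ V`, which form a multiplicative monoid because `V` is an
additive one. -/
noncomputable def expNegTwoSubmonoid (V : AddSubmonoid C(X, ℝ)) : Submonoid C(X, ℝ) where
  carrier := expNegTwo '' V
  one_mem' := ⟨0, V.zero_mem, expNegTwo_zero⟩
  mul_mem' := by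
    rintro _ _ ⟨φ, hφ, rfl⟩ ⟨ψ, hψ, rfl⟩
    exact ⟨φ + ψ, V.add_mem hφ hψ, expNegTwo_add φ ψ⟩

lemma separatesPoints_expNegTwoSubmonoid {V : AddSubmonoid C(X, ℝ)}
    (hV : Set.SeparatesPoints ((fun φ : C(X, ℝ) ↦ (φ : X → ℝ)) '' V)) :
    Set.SeparatesPoints ((fun g : C(X, ℝ) ↦ (g : X → ℝ)) '' expNegTwoSubmonoid V) := by
  intro x y hxy
  obtain ⟨_, ⟨φ, hφ, rfl⟩, hne⟩ := hV hxy
  refine ⟨_, ⟨expNegTwo φ, ⟨φ, hφ, rfl⟩, rfl⟩, ?_⟩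
  simpa using hne

/-- All translates `tanh (φ + b)` with `φ ∈ V` and `b : ℝ`. -/
def tanhTranslates (V : Set C(X, ℝ)) : Set C(X, ℝ) :=
  Set.image2 tanhAdd V Set.univ

lemma tanhAdd_mem_tanhTranslates {V : Set C(X, ℝ)} {φ : C(X, ℝ)} (hφ : φ ∈ V) (b : ℝ) :
    tanhAdd φ b ∈ tanhTranslates V :=
  Set.mem_image2_of_mem hφ (Set.mem_univ b)

variable [CompactSpace X]

lemma tendsto_exp_smul_one_sub_tanhAdd (φ : C(X, ℝ)) :
    Tendsto (fun b : ℝ ↦ (Real.exp (2 * b) / 2) • (1 - tanhAdd φ b)) atTop (𝓝 (expNegTwo φ)) := by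
  rw [tendsto_iff_norm_sub_tendsto_zero]
  have hbound : Tendsto (fun b : ℝ ↦ Real.exp (-2 * b) * ‖expNegTwo φ‖ ^ 2) atTop (𝓝 0) := by
    simpa using tendsto_exp_neg_two_mul_atTop.mul_const (‖expNegTwo φ‖ ^ 2)
  refine squeeze_zero (fun _ ↦ norm_nonneg _) (fun b ↦ ?_) hbound
  refine (ContinuousMap.norm_le _ (by positivity)).2 fun x ↦ ?_
  have hexp : Real.exp (-2 * φ x) ≤ ‖expNegTwo φ‖ :=
    (le_abs_self _).trans ((expNegTwo φ).norm_coe_le_norm x)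
  calc
    _ ≤ Real.exp (-2 * b) * Real.exp (-2 * φ x) ^ 2 := abs_exp_mul_one_sub_tanh_sub_exp_le (φ x) b
    _ ≤ Real.exp (-2 * b) * ‖expNegTwo φ‖ ^ 2 := by gcongr

lemma tendsto_tanhAdd_one (φ : C(X, ℝ)) : Tendsto (tanhAdd φ) atTop (𝓝 1) := by
  have hscaled := (tendsto_exp_neg_two_mul_atTop.const_mul 2).smul
    (tendsto_exp_smul_one_sub_tanhAdd φ)
  have hsub : Tendsto (fun b ↦ 1 - tanhAdd φ b) atTop (𝓝 0) := by
    rw [mul_zero, zero_smul] at hscaled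
    refine hscaled.congr fun b ↦ ?_
    rw [smul_smul, neg_mul, Real.exp_neg]
    field_simp
    exact one_smul ℝ _
  simpa using hsub.const_sub 1

lemma one_mem_topologicalClosure_span_tanhTranslates {V : Set C(X, ℝ)} (hV : V.Nonempty) :
    1 ∈ (Submodule.span ℝ (tanhTranslates V)).topologicalClosure := by
  obtain ⟨φ, hφ⟩ := hV
  exact mem_closure_of_tendsto (tendsto_tanhAdd_one φ) <| .of_forall fun b ↦
    Submodule.subset_span (tanhAdd_mem_tanhTranslates hφ b)

lemma expNegTwo_mem_topologicalClosure_span_tanhTranslates {V : Set C(X, ℝ)} {φ : C(X, ℝ)}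
    (hφ : φ ∈ V) : expNegTwo φ ∈ (Submodule.span ℝ (tanhTranslates V)).topologicalClosure := by
  set A := (Submodule.span ℝ (tanhTranslates V)).topologicalClosure
  have hone : 1 ∈ A := one_mem_topologicalClosure_span_tanhTranslates ⟨φ, hφ⟩
  have htanh (b : ℝ) : tanhAdd φ b ∈ A :=
    Submodule.le_topologicalClosure _ (Submodule.subset_span (tanhAdd_mem_tanhTranslates hφ b))
  exact (Submodule.isClosed_topologicalClosure _).mem_of_tendsto
    (tendsto_exp_smul_one_sub_tanhAdd φ) <| .of_forall fun b ↦
      A.smul_mem _ (A.sub_mem hone (htanh b))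

lemma topologicalClosure_span_submonoid_eq_top_of_separatesPoints {S : Submonoid C(X, ℝ)}
    (hS : Set.SeparatesPoints ((fun g : C(X, ℝ) ↦ (g : X → ℝ)) '' S)) :
    (Submodule.span ℝ (S : Set C(X, ℝ))).topologicalClosure = ⊤ := by
  have hadjoin : (Algebra.adjoin ℝ (S : Set C(X, ℝ))).SeparatesPoints := by
    intro x y hxy
    obtain ⟨_, ⟨g, hg, rfl⟩, hne⟩ := hS hxy
    exact ⟨g, ⟨g, Algebra.subset_adjoin hg, rfl⟩, hne⟩
  have hspan : Subalgebra.toSubmodule (Algebra.adjoin ℝ (S : Set C(X, ℝ))) =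
      Submodule.span ℝ (S : Set C(X, ℝ)) := by
    rw [Algebra.adjoin_eq_span, Submonoid.closure_eq]
  rw [← hspan]
  exact congrArg Subalgebra.toSubmodule
    (ContinuousMap.subalgebra_topologicalClosure_eq_top_of_separatesPoints _ hadjoin)

theorem topologicalClosure_span_tanhTranslates_mul_eq_top {V W : AddSubmonoid C(X, ℝ)}
    (hVW : Set.SeparatesPoints
      ((fun φ : C(X, ℝ) ↦ (φ : X → ℝ)) '' (V ⊔ W : AddSubmonoid C(X, ℝ)))) :
    (Submodule.span ℝ (tanhTranslates (V : Set C(X, ℝ)) * tanhTranslates W)).topologicalClosure =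
      ⊤ := by
  rw [eq_top_iff, ← topologicalClosure_span_submonoid_eq_top_of_separatesPoints
    (separatesPoints_expNegTwoSubmonoid hVW)]
  refine Submodule.topologicalClosure_minimal _ (Submodule.span_le.2 ?_)
    (Submodule.isClosed_topologicalClosure _)
  rintro _ ⟨_, hχ, rfl⟩
  obtain ⟨φ, hφ, ψ, hψ, rfl⟩ := AddSubmonoid.mem_sup.1 hχ
  rw [expNegTwo_add]
  exact mul_mem_topologicalClosure_span_mul
    (expNegTwo_mem_topologicalClosure_span_tanhTranslates hφ)
    (expNegTwo_mem_topologicalClosure_span_tanhTranslates hψ)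

end ContinuousMaps

section Dual

variable {X E F : Type*} [TopologicalSpace X]
  [AddCommGroup E] [Module ℝ E] [TopologicalSpace E]
  [AddCommGroup F] [Module ℝ F] [TopologicalSpace F]

/-- The functions `φ ∘ p` with `φ` a continuous linear functional: the bias-free pre-activations
that factor through the feature map `p`. -/
def dualPullback (p : C(X, E)) : AddSubmonoid C(X, ℝ) where
  carrier := Set.range fun φ : StrongDual ℝ E ↦ (φ : C(E, ℝ)).comp p
  zero_mem' := ⟨0, rfl⟩
  add_mem' := by
    rintro _ _ ⟨φ, rfl⟩ ⟨ψ, rfl⟩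
    exact ⟨φ + ψ, rfl⟩

lemma separatesPoints_dualPullback_sup [SeparatingDual ℝ E] [SeparatingDual ℝ F]
    {p : C(X, E)} {q : C(X, F)} (hpq : Function.Injective fun x ↦ (p x, q x)) :
    Set.SeparatesPoints ((fun φ : C(X, ℝ) ↦ (φ : X → ℝ)) ''
      (dualPullback p ⊔ dualPullback q : AddSubmonoid C(X, ℝ))) := by
  intro x y hxy
  by_cases hp : p x = p y
  · have hq : q x ≠ q y := fun hq ↦ hxy (hpq (Prod.ext hp hq))
    obtain ⟨ψ, hψ⟩ := SeparatingDual.exists_separating_of_ne (R := ℝ) hq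
    exact ⟨_, ⟨_, AddSubmonoid.mem_sup_right ⟨ψ, rfl⟩, rfl⟩, hψ⟩
  · obtain ⟨φ, hφ⟩ := SeparatingDual.exists_separating_of_ne (R := ℝ) hp
    exact ⟨_, ⟨_, AddSubmonoid.mem_sup_left ⟨φ, rfl⟩, rfl⟩, hφ⟩

lemma exists_eq_sum_of_mem_span_tanhTranslates_mul {p : C(X, E)} {q : C(X, F)} {g : C(X, ℝ)}
    (hg : g ∈ Submodule.span ℝ (tanhTranslates (dualPullback p : Set C(X, ℝ)) *
      tanhTranslates (dualPullback q))) :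
    ∃ (N : ℕ) (u : Fin N → ℝ) (φ : Fin N → StrongDual ℝ E) (ψ : Fin N → StrongDual ℝ F)
      (b c : Fin N → ℝ), ∀ x, g x =
        ∑ j, u j * (Real.tanh (φ j (p x) + b j) * Real.tanh (ψ j (q x) + c j)) := by
  obtain ⟨N, u, v, rfl⟩ := Submodule.mem_span_set'.1 hg
  have hv (j : Fin N) : ∃ (φ : StrongDual ℝ E) (ψ : StrongDual ℝ F) (b c : ℝ), ∀ x,
      (v j : C(X, ℝ)) x = Real.tanh (φ (p x) + b) * Real.tanh (ψ (q x) + c) := by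
    obtain ⟨_, ⟨_, ⟨φ, rfl⟩, b, -, rfl⟩, _, ⟨_, ⟨ψ, rfl⟩, c, -, rfl⟩, hmul⟩ := (v j).2
    exact ⟨φ, ψ, b, c, fun x ↦ (DFunLike.congr_fun hmul x).symm⟩
  choose φ ψ b c hv using hv
  refine ⟨N, u, φ, ψ, b, c, fun x ↦ ?_⟩
  simp only [ContinuousMap.sum_apply, ContinuousMap.smul_apply, smul_eq_mul, hv]

theorem sov_tanh_dense_general [SeparatingDual ℝ E] [SeparatingDual ℝ F] {K : Set (E × F)}
    (hK : IsCompact K) {f : E × F → ℝ} (hf : ContinuousOn f K) {ε : ℝ} (hε : 0 < ε) :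
    ∃ (N : ℕ) (u : Fin N → ℝ) (φ : Fin N → StrongDual ℝ E) (ψ : Fin N → StrongDual ℝ F)
      (b c : Fin N → ℝ), ∀ z ∈ K,
        |(∑ j, u j * (Real.tanh (φ j z.1 + b j) * Real.tanh (ψ j z.2 + c j))) - f z| < ε := by
  have : CompactSpace K := isCompact_iff_compactSpace.1 hK
  let p : C(K, E) := ⟨fun z ↦ z.1.1, by fun_prop⟩
  let q : C(K, F) := ⟨fun z ↦ z.1.2, by fun_prop⟩
  let fK : C(K, ℝ) := ⟨K.domRestrict f, hf.domRestrict⟩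
  have hdense := topologicalClosure_span_tanhTranslates_mul_eq_top
    (separatesPoints_dualPullback_sup (p := p) (q := q) Subtype.val_injective)
  obtain ⟨g, hg, hfg⟩ := Metric.mem_closure_iff.1 (Submodule.eq_top_iff'.1 hdense fK) ε hε
  obtain ⟨N, u, φ, ψ, b, c, hsum⟩ := exists_eq_sum_of_mem_span_tanhTranslates_mul hg
  refine ⟨N, u, φ, ψ, b, c, fun z hz ↦ ?_⟩
  have hdist := (ContinuousMap.dist_lt_iff hε).1 hfg ⟨z, hz⟩
  rwa [dist_comm, Real.dist_eq, hsum] at hdist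

end Dual

/-- Density of separation-of-variables (SoV) space-time random-feature sums with
the `tanh` activation in `C(Ω × [0,T])` with the supremum norm. -/
theorem sov_tanh_dense {d : ℕ} (Ω : Set (Fin d → ℝ)) (hΩ : IsCompact Ω) (T : ℝ) (hT : 0 < T)
    (f : ((Fin d → ℝ) × ℝ) → ℝ) (hf : ContinuousOn f (Ω ×ˢ Set.Icc 0 T))
    (ε : ℝ) (hε : 0 < ε) :
    ∃ (N : ℕ) (u : Fin N → ℝ) (kx : Fin N → (Fin d → ℝ)) (kt : Fin N → ℝ)
      (bx : Fin N → ℝ) (bt : Fin N → ℝ),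
      ∀ x ∈ Ω, ∀ t ∈ Set.Icc (0 : ℝ) T,
        |(∑ j, u j * (Real.tanh ((∑ i, kx j i * x i) + bx j) * Real.tanh (kt j * t + bt j)))
          - f (x, t)| < ε := by
  obtain ⟨N, u, φ, ψ, bx, bt, happrox⟩ := sov_tanh_dense_general (hΩ.prod isCompact_Icc) hf hε
  refine ⟨N, u, fun j i ↦ φ j (Pi.single i 1), fun j ↦ ψ j 1, bx, bt, fun x hx t ht ↦ ?_⟩
  simpa only [sum_apply_single_one_mul, apply_one_mul] using happrox (x, t) ⟨hx, ht⟩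
end

section
/- Let σ : ℝ → ℝ be a bounded measurable sigmoidal function, let k ∈ ℝ^m, and let b, θ ∈ ℝ. Then as λ → +∞, the functions x ↦ σ(λ(⟨k, x⟩ + b) + θ) converge pointwise and boundedly on ℝ^m to the function γ given by γ(x) = 1 if ⟨k, x⟩ + b > 0, γ(x) = 0 if ⟨k, x⟩ + b < 0, and γ(x) = σ(θ) if ⟨k, x⟩ + b = 0; moreover, for every finite signed Borel measure μ on a compact set K ⊂ ℝ^m, ∫_K σ(λ(⟨k,x⟩ + b) + θ) dμ(x) → ∫_K γ(x) dμ(x) as λ → +∞. -/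
open Filter MeasureTheory

/-- The three-valued step function equal to `neg`, `zero` or `pos` according to the sign of its
argument. The function `γ` of the theorem is `x ↦ signStep 0 (σ θ) 1 (⟨k, x⟩ + b)`. -/
def signStep {R E : Type*} [LinearOrder R] [Zero R] (neg zero pos : E) (t : R) : E :=
  if 0 < t then pos else if t < 0 then neg else zero

theorem tendsto_comp_mul_add_const_signStep {R E : Type*} [Field R] [LinearOrder R]
    [IsStrictOrderedRing R] [TopologicalSpace E] {σ : R → E} {neg pos : E}
    (hpos : Tendsto σ atTop (nhds pos)) (hneg : Tendsto σ atBot (nhds neg)) (t θ : R) :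
    Tendsto (fun r : R => σ (r * t + θ)) atTop (nhds (signStep neg (σ θ) pos t)) := by
  unfold signStep
  split_ifs with ht_pos ht_neg
  · exact hpos.comp (tendsto_atTop_add_const_right _ _ (tendsto_id.atTop_mul_const ht_pos))
  · exact hneg.comp (tendsto_atBot_add_const_right _ _ (tendsto_id.atTop_mul_const_of_neg ht_neg))
  · obtain rfl : t = 0 := le_antisymm (not_lt.mp ht_pos) (not_lt.mp ht_neg)
    simp only [mul_zero, zero_add, tendsto_const_nhds]

section Integral

variable {α E : Type*} [MeasurableSpace α] [NormedAddCommGroup E] [NormedSpace ℝ E]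
  {σ : ℝ → E} {neg pos : E}

theorem tendsto_integral_comp_mul_add_const_signStep (hσm : StronglyMeasurable σ)
    (hσb : ∃ C, ∀ z, ‖σ z‖ ≤ C)
    (hpos : Tendsto σ atTop (nhds pos)) (hneg : Tendsto σ atBot (nhds neg))
    {μ : Measure α} [IsFiniteMeasure μ] {f : α → ℝ} (hf : AEMeasurable f μ) (θ : ℝ) :
    Tendsto (fun r : ℝ => ∫ x, σ (r * f x + θ) ∂μ) atTop
      (nhds (∫ x, signStep neg (σ θ) pos (f x) ∂μ)) := by
  obtain ⟨C, hC⟩ := hσb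
  have h_meas (r : ℝ) : AEStronglyMeasurable (fun x => σ (r * f x + θ)) μ :=
    hσm.aestronglyMeasurable.comp_aemeasurable ((hf.const_mul r).add_const θ)
  exact tendsto_integral_filter_of_dominated_convergence (fun _ => C)
    (.of_forall h_meas)
    (.of_forall fun _ => .of_forall fun _ => hC _)
    (integrable_const C)
    (.of_forall fun x => tendsto_comp_mul_add_const_signStep hpos hneg (f x) θ)

theorem sigmoidal_bounded_pointwise_limit_general (hσm : StronglyMeasurable σ)
    (hσb : ∃ C, ∀ z, ‖σ z‖ ≤ C)
    (hpos : Tendsto σ atTop (nhds pos)) (hneg : Tendsto σ atBot (nhds neg))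
    {f : α → ℝ} (hf : Measurable f) (θ : ℝ) :
    (∀ x, Tendsto (fun r : ℝ => σ (r * f x + θ)) atTop
      (nhds (signStep neg (σ θ) pos (f x)))) ∧
    (∃ C, ∀ (r : ℝ) (x : α), ‖σ (r * f x + θ)‖ ≤ C) ∧
    ∀ (μ₁ μ₂ : Measure α) [IsFiniteMeasure μ₁] [IsFiniteMeasure μ₂],
      Tendsto (fun r : ℝ => (∫ x, σ (r * f x + θ) ∂μ₁) - ∫ x, σ (r * f x + θ) ∂μ₂) atTop
        (nhds ((∫ x, signStep neg (σ θ) pos (f x) ∂μ₁) -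
          ∫ x, signStep neg (σ θ) pos (f x) ∂μ₂)) :=
  ⟨fun x => tendsto_comp_mul_add_const_signStep hpos hneg (f x) θ,
    hσb.imp fun _ hC _ _ => hC _,
    fun _ _ _ _ =>
      (tendsto_integral_comp_mul_add_const_signStep hσm hσb hpos hneg hf.aemeasurable θ).sub
        (tendsto_integral_comp_mul_add_const_signStep hσm hσb hpos hneg hf.aemeasurable θ)⟩

end Integral

/-- Bounded pointwise convergence of scaled sigmoidal functions, and the resulting
convergence of integrals against finite signed Borel measures.  For a bounded
measurable sigmoidal `σ`, as `λ → +∞` the functions `x ↦ σ(λ(⟨k,x⟩ + b) + θ)`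
converge pointwise to the limit `γ` (equal to `1`, `0`, or `σ(θ)` according to the
sign of `⟨k,x⟩ + b`), they are uniformly bounded, and for every finite signed Borel
measure `μ = μ₁ - μ₂` (Jordan decomposition into two finite measures) on a compact
set `K ⊆ ℝ^m`, the corresponding integrals converge to the integral of `γ`. -/
theorem sigmoidal_bounded_pointwise_limit (m : ℕ) (σ : ℝ → ℝ)
    (hσm : Measurable σ) (hσb : ∃ C, ∀ z, |σ z| ≤ C)
    (hσ1 : Tendsto σ atTop (nhds 1)) (hσ0 : Tendsto σ atBot (nhds 0))
    (k : Fin m → ℝ) (b θ : ℝ) :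
    (∀ x : Fin m → ℝ,
      Tendsto (fun lam : ℝ => σ (lam * ((∑ i, k i * x i) + b) + θ)) atTop
        (nhds (if 0 < (∑ i, k i * x i) + b then (1 : ℝ)
          else if (∑ i, k i * x i) + b < 0 then 0 else σ θ))) ∧
    (∃ C : ℝ, ∀ (lam : ℝ) (x : Fin m → ℝ), |σ (lam * ((∑ i, k i * x i) + b) + θ)| ≤ C) ∧
    (∀ (K : Set (Fin m → ℝ)), IsCompact K →
      ∀ (μ₁ μ₂ : Measure (Fin m → ℝ)), IsFiniteMeasure μ₁ → IsFiniteMeasure μ₂ →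
        Tendsto (fun lam : ℝ =>
            (∫ x in K, σ (lam * ((∑ i, k i * x i) + b) + θ) ∂μ₁) -
            ∫ x in K, σ (lam * ((∑ i, k i * x i) + b) + θ) ∂μ₂) atTop
          (nhds ((∫ x in K, (if 0 < (∑ i, k i * x i) + b then (1 : ℝ)
              else if (∑ i, k i * x i) + b < 0 then 0 else σ θ) ∂μ₁) -
            ∫ x in K, (if 0 < (∑ i, k i * x i) + b then (1 : ℝ)
              else if (∑ i, k i * x i) + b < 0 then 0 else σ θ) ∂μ₂))) := by
  have h := sigmoidal_bounded_pointwise_limit_general hσm.stronglyMeasurable hσb hσ1 hσ0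
    (f := fun x : Fin m → ℝ => (∑ i, k i * x i) + b) (by fun_prop) θ
  exact ⟨h.1, h.2.1, fun K _ μ₁ μ₂ _ _ => h.2.2 (μ₁.restrict K) (μ₂.restrict K)⟩
end
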